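/- arXiv:1704.04472 — 4 statements merged into one kernel-verified Lean document; each statement's English description precedes it below -/
import Mathlib

section
/- Let S ∈ Σⁿ, let d ≥ 1 with n > 6d, and let 1 ≤ i ≤ d and n−d+1 ≤ j ≤ n. Suppose that the concatenation S[i,3d]·S[n−3d+1,j] is unbordered and that per(S[d+1,n−d]) ≥ n − 3d. Then the factor S[i,j] of S is unbordered. -/
/-!
A proper border of length `ℓ` of `S[i,j]` makes `p = |S[i,j]| - ℓ` a period of `S[i,j]`, hence of
its factor `S[d+1,n-d]`. Since the shortest period of the latter is at least `n - 3d`, also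
`p ≥ n - 3d`, which says `ℓ ≤ (3d - i + 1) - (n - j)`. So `ℓ` is at most the length of each of
`S[i,3d]` and `S[n-3d+1,j]`, and the border of `S[i,j]` is also a proper border of their
concatenation, contradicting that the concatenation is unbordered.
-/

open Finset

/-- `S` has a border of length `ℓ`: `1 ≤ ℓ ≤ |S|` and the length-`ℓ` prefix of `S`
equals its length-`ℓ` suffix. -/
def HasBorder {α : Type*} (S : List α) (ℓ : ℕ) : Prop :=
  1 ≤ ℓ ∧ ℓ ≤ S.length ∧ S.take ℓ = S.drop (S.length - ℓ)

/-- A string is unbordered if it has no proper border (no border of length `< |S|`). -/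
def Unbordered {α : Type*} (S : List α) : Prop :=
  ∀ ℓ, ℓ < S.length → ¬ HasBorder S ℓ

/-- `maxUnb S` is `L(S)`: the maximum length of (nonempty) unbordered factors of `S`. -/
noncomputable def maxUnb {α : Type*} (S : List α) : ℕ :=
  sSup {k | ∃ T, T ≠ [] ∧ T <:+: S ∧ Unbordered T ∧ T.length = k}

/-- `p > 0` is a period of `T` if `T[i] = T[i+p]` whenever both indices are valid. -/
def IsPeriod {α : Type*} (T : List α) (p : ℕ) : Prop :=
  0 < p ∧ ∀ (i : ℕ) (h : i + p < T.length),
    T[i]'(Nat.lt_of_le_of_lt (Nat.le_add_right i p) h) = T[i + p]'h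

/-- `per T` is the shortest period of `T`. -/
noncomputable def per {α : Type*} (T : List α) : ℕ := sInf {p | IsPeriod T p}

/-- `borderF S` is `F(S)`: the length of the shortest border of `S`. -/
noncomputable def borderF {α : Type*} (S : List α) : ℕ := sInf {ℓ | HasBorder S ℓ}

/-- `substr S i j` is the factor `S[i,j]` in 1-based closed-interval indexing. -/
def substr {α : Type*} (S : List α) (i j : ℕ) : List α := (S.drop (i - 1)).take (j + 1 - i)

lemma substr_getElem? {α : Type*} (S : List α) (i j k : ℕ) (hk : k < j + 1 - i) :
    (substr S i j)[k]? = S[i - 1 + k]? := by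
  simp [substr, hk]

lemma substr_length {α : Type*} (S : List α) (i j : ℕ) (hi : 1 ≤ i) (hj : j ≤ S.length) :
    (substr S i j).length = j + 1 - i := by
  simp only [substr, List.length_take, List.length_drop]
  omega

/-- Borders expressed letter by letter. -/
lemma hasBorder_iff {α : Type*} (T : List α) (ℓ : ℕ) :
    HasBorder T ℓ ↔ 1 ≤ ℓ ∧ ℓ ≤ T.length ∧ ∀ k < ℓ, T[k]? = T[T.length - ℓ + k]? := by
  unfold HasBorder
  refine and_congr_right fun _ => and_congr_right fun hle => ⟨fun h k hk => ?_, fun h => ?_⟩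
  · have := congrArg (fun L => L[k]?) h
    simpa [List.getElem?_take, hk] using this
  · apply List.ext_getElem?
    intro k
    by_cases hk : k < ℓ
    · simpa [List.getElem?_take, hk] using h k hk
    · have : T.length ≤ T.length - ℓ + k := by omega
      simp [hk, this]

/-- let `S ∈ Σⁿ`, `d ≥ 1`, `n > 6d`, `1 ≤ i ≤ d` and `n-d+1 ≤ j ≤ n`. If the
concatenation `S[i,3d]·S[n-3d+1,j]` is unbordered and `per(S[d+1,n-d]) ≥ n - 3d`, then the factor
`S[i,j]` is unbordered. -/
theorem factor_unbordered_of_glued_unbordered {α : Type*} (n d i j : ℕ) (S : List α)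
    (hlen : S.length = n) (hd : 1 ≤ d) (hn : 6 * d < n)
    (hi1 : 1 ≤ i) (hi2 : i ≤ d) (hj1 : n - d + 1 ≤ j) (hj2 : j ≤ n)
    (h1 : Unbordered (substr S i (3 * d) ++ substr S (n - 3 * d + 1) j))
    (h2 : n - 3 * d ≤ per (substr S (d + 1) (n - d))) :
    Unbordered (substr S i j) := by
  intro ℓ hℓ hb
  rw [hasBorder_iff] at hb
  obtain ⟨hpos, -, hb⟩ := hb
  have hT := substr_length S i j hi1 (by omega)
  have hM := substr_length S (d + 1) (n - d) (by omega) (by omega)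
  have hA := substr_length S i (3 * d) hi1 (by omega)
  have hB := substr_length S (n - 3 * d + 1) j (by omega) (by omega)
  rw [hT] at hℓ hb
  -- The border read as an equality of letters of `S` itself.
  have hS : ∀ k < ℓ, S[i - 1 + k]? = S[j - ℓ + k]? := by
    intro k hk
    have h := hb k hk
    rw [substr_getElem? _ _ _ _ (by omega), substr_getElem? _ _ _ _ (by omega)] at h
    rw [h]
    congr 1
    omega
  have hper : IsPeriod (substr S (d + 1) (n - d)) (j + 1 - i - ℓ) := by
    refine ⟨by omega, fun k hk => ?_⟩
    apply Option.some_injective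
    rw [← List.getElem?_eq_getElem, ← List.getElem?_eq_getElem,
      substr_getElem? _ _ _ _ (by omega), substr_getElem? _ _ _ _ (by omega)]
    -- Position `k` of the middle factor is position `d + 1 - i + k` of `S[i,j]`.
    have h := hS (d + 1 - i + k) (by omega)
    convert h using 2 <;> omega
  have hle : n - 3 * d ≤ j + 1 - i - ℓ := h2.trans (Nat.sInf_le hper)
  refine h1 ℓ (by rw [List.length_append]; omega) ?_
  rw [hasBorder_iff]
  refine ⟨hpos, by rw [List.length_append]; omega, fun k hk => ?_⟩
  rw [List.length_append, List.getElem?_append_left (by omega),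
    List.getElem?_append_right (by omega),
    substr_getElem? _ _ _ _ (by omega), substr_getElem? _ _ _ _ (by omega), hS k hk]
  congr 1
  omega
end

section
/- Let S ∈ Σⁿ, let d ≥ 1 with n > 6d, and let 1 ≤ i ≤ d and n−d+1 ≤ j ≤ n. Suppose that the factor S[i,j] is unbordered and that per(S[d+1,3d]·S[n−3d+1,n−d]) ≥ 3d. Then the concatenation S[i,3d]·S[n−3d+1,j] is unbordered. -/
/-!
Let `T = S[i,3d] · S[n-3d+1,j]`, with left part of length `A` and right part of length `B`; both
lengths are at most `3d`. Suppose that `T` has a proper border of length `ℓ`, so that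
`p = A + B - ℓ` is a period of `T`.

* If `ℓ ≤ A` and `ℓ ≤ B`, the two copies of the border are a prefix of `S[i,3d]` and a suffix of
  `S[n-3d+1,j]`, so `S[i,j]` has a border of length `ℓ` as well.
* Otherwise `p < max A B ≤ 3d`. The string `S[d+1,3d] · S[n-3d+1,n-d]` is a factor of `T`, hence
  inherits the period `p < 3d`, against the hypothesis on its shortest period.
-/

open Finset

theorem hasBorder_iff_getElem? {α : Type*} (T : List α) (l : ℕ) :
    HasBorder T l ↔ 1 ≤ l ∧ l ≤ T.length ∧ ∀ k < l, T[k]? = T[T.length - l + k]? := by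
  unfold HasBorder
  refine and_congr_right fun _ => and_congr_right fun hl => ⟨fun h k hk => ?_, fun h => ?_⟩
  · have := congrArg (fun L : List α => L[k]?) h
    simpa [List.getElem?_take, hk] using this
  · apply List.ext_getElem?
    intro k
    rw [List.getElem?_take, List.getElem?_drop]
    split_ifs with hk
    · exact h k hk
    · exact (List.getElem?_eq_none (by omega)).symm

theorem isPeriod_of_getElem? {α : Type*} (T : List α) (p : ℕ) (hp : 0 < p)
    (h : ∀ k, k + p < T.length → T[k]? = T[k + p]?) : IsPeriod T p := by
  refine ⟨hp, fun k hk => ?_⟩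
  have := h k hk
  rwa [List.getElem?_eq_getElem (by omega), List.getElem?_eq_getElem hk, Option.some_inj] at this

theorem length_substr {α : Type*} (S : List α) (a b : ℕ) (ha : 1 ≤ a) (hb : b ≤ S.length) :
    (substr S a b).length = b + 1 - a := by
  simp only [substr, List.length_take, List.length_drop]
  omega

theorem getElem?_substr {α : Type*} (S : List α) (a b k : ℕ) (hk : k < b + 1 - a) :
    (substr S a b)[k]? = S[a - 1 + k]? := by
  simp [substr, List.getElem?_take, hk]

/-- Letters of a concatenation of two factors `S[a,b] · S[c,e]`, read off from `S`. -/
theorem getElem?_glue {α : Type*} (S : List α) (a b c e k : ℕ) (ha : 1 ≤ a) (hb : b ≤ S.length)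
    (hk : k < (b + 1 - a) + (e + 1 - c)) :
    (substr S a b ++ substr S c e)[k]? =
      if k < b + 1 - a then S[a - 1 + k]? else S[c - 1 + (k - (b + 1 - a))]? := by
  rw [List.getElem?_append, length_substr S a b ha hb]
  split_ifs with h
  · exact getElem?_substr S a b k h
  · exact getElem?_substr S c e _ (by omega)

/-- let `S ∈ Σⁿ`, `d ≥ 1`, `n > 6d`, `1 ≤ i ≤ d` and `n-d+1 ≤ j ≤ n`. If the
factor `S[i,j]` is unbordered and `per(S[d+1,3d]·S[n-3d+1,n-d]) ≥ 3d`, then the concatenation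
`S[i,3d]·S[n-3d+1,j]` is unbordered. -/
theorem glued_unbordered_of_factor_unbordered {α : Type*} (n d i j : ℕ) (S : List α)
    (hlen : S.length = n) (hd : 1 ≤ d) (hn : 6 * d < n)
    (hi1 : 1 ≤ i) (hi2 : i ≤ d) (hj1 : n - d + 1 ≤ j) (hj2 : j ≤ n)
    (h1 : Unbordered (substr S i j))
    (h2 : 3 * d ≤ per (substr S (d + 1) (3 * d) ++ substr S (n - 3 * d + 1) (n - d))) :
    Unbordered (substr S i (3 * d) ++ substr S (n - 3 * d + 1) j) := by
  intro l hl hB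
  rw [hasBorder_iff_getElem?] at hB
  obtain ⟨hl1, -, hB⟩ := hB
  have hT : (substr S i (3 * d) ++ substr S (n - 3 * d + 1) j).length
      = (3 * d + 1 - i) + (j + 1 - (n - 3 * d + 1)) := by
    rw [List.length_append, length_substr S _ _ hi1 (by omega),
      length_substr S _ _ (by omega) (by omega)]
  rw [hT] at hl hB
  by_cases hc : l ≤ 3 * d + 1 - i ∧ l ≤ j + 1 - (n - 3 * d + 1)
  · -- Each copy of the border lies inside one of the two parts, so it is a border of `S[i,j]`.
    obtain ⟨hc1, hc2⟩ := hc
    have hlen' : (substr S i j).length = j + 1 - i := length_substr S i j hi1 (by omega)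
    refine h1 l (by omega) ((hasBorder_iff_getElem? _ _).2 ⟨hl1, by omega, fun k hk => ?_⟩)
    have h := hB k hk
    rw [getElem?_glue S _ _ _ _ _ hi1 (by omega) (by omega),
      getElem?_glue S _ _ _ _ _ hi1 (by omega) (by omega), if_pos (by omega),
      if_neg (by omega)] at h
    rw [hlen', getElem?_substr S _ _ _ (by omega), getElem?_substr S _ _ _ (by omega), h]
    congr 1
    omega
  · -- A border longer than one of the parts gives a period smaller than the length of the other.
    have hM : (substr S (d + 1) (3 * d) ++ substr S (n - 3 * d + 1) (n - d)).length = 4 * d := by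
      rw [List.length_append, length_substr S _ _ (by omega) (by omega),
        length_substr S _ _ (by omega) (by omega)]
      omega
    obtain ⟨p, hp⟩ : ∃ p, p = (3 * d + 1 - i) + (j + 1 - (n - 3 * d + 1)) - l := ⟨_, rfl⟩
    -- The middle string occurs in the glued string at offset `d + 1 - i`.
    have hsub : ∀ k < 4 * d,
        (substr S (d + 1) (3 * d) ++ substr S (n - 3 * d + 1) (n - d))[k]? =
          (substr S i (3 * d) ++ substr S (n - 3 * d + 1) j)[d + 1 - i + k]? := by
      intro k hk
      rw [getElem?_glue S _ _ _ _ _ (by omega) (by omega) (by omega),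
        getElem?_glue S _ _ _ _ _ hi1 (by omega) (by omega)]
      split_ifs <;> first | omega | (congr 1; omega)
    have hper : IsPeriod (substr S (d + 1) (3 * d) ++ substr S (n - 3 * d + 1) (n - d)) p := by
      refine isPeriod_of_getElem? _ _ (by omega) fun k hk => ?_
      rw [hM] at hk
      rw [hsub k (by omega), hsub (k + p) hk, hB _ (by omega)]
      congr 1
      omega
    have hle : per (substr S (d + 1) (3 * d) ++ substr S (n - 3 * d + 1) (n - d)) ≤ p :=
      Nat.sInf_le hper
    omega
end

section
/- Let S ∈ Σⁿ, let d ≥ 1 with n > 6d, and define S̄ = S[1,3d]·S[n−3d+1,n], S' = S[d+1,n−d], and S̄' = S[d+1,3d]·S[n−3d+1,n−d]. If |S̄| − L(S̄) ≤ d, |S'| − per(S') ≤ d, and |S̄'| − per(S̄') ≤ d, then |S| − L(S) = |S̄| − L(S̄). -/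
/-!
Write `S = A ++ M ++ B` and `Sbar = A ++ B` with `|A| = |B| = 3d`. Both are strings with the same
outer blocks and different middles, so it suffices to compare `A ++ M ++ B` with `A ++ N ++ B` for
arbitrary `M`, `N`, and to use the comparison twice.

Cut `i` letters from the left and `j` from the right, `i + j ≤ d`. If the trimmed string
`T = A.drop i ++ N ++ B.take (3d - j)` has a proper border of length `ℓ`, then `p = |T| - ℓ` is a
period of `T`, hence of its factor obtained by cutting `d` letters on each side. The bound on the
shortest period of that factor gives `ℓ ≤ 3d - i - j`, so both occurrences of the border lie
inside the blocks `A` and `B`, and the border is also one of `A.drop i ++ M ++ B.take (3d - j)`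
(`unbordered_transfer`). Hence a longest unbordered factor of one string, which misses at most `d`
letters, gives an unbordered factor of the other missing equally many letters (`defect_le`).
-/

open Finset

theorem maxUnb_bddAbove {α : Type*} (S : List α) :
    BddAbove {k | ∃ T, T ≠ [] ∧ T <:+: S ∧ Unbordered T ∧ T.length = k} :=
  ⟨S.length, by rintro k ⟨T, -, h, -, rfl⟩; exact h.length_le⟩

theorem exists_of_maxUnb_pos {α : Type*} (S : List α) (h : 0 < maxUnb S) :
    ∃ T, T ≠ [] ∧ T <:+: S ∧ Unbordered T ∧ T.length = maxUnb S := by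
  apply Nat.sSup_mem _ (maxUnb_bddAbove S)
  by_contra hne
  rw [Set.not_nonempty_iff_eq_empty] at hne
  simp [maxUnb, hne] at h

theorem length_le_maxUnb {α : Type*} {S T : List α} (h0 : T ≠ []) (h : T <:+: S)
    (hT : Unbordered T) : T.length ≤ maxUnb S :=
  le_csSup (maxUnb_bddAbove S) ⟨T, h0, h, hT, rfl⟩

/-- A proper border of length `ℓ` of `T` makes `|T| - ℓ` a period of every factor of `T`. -/
theorem HasBorder.isPeriod_infix {α : Type*} {T U : List α} {ℓ : ℕ} (h : HasBorder T ℓ)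
    (hl : ℓ < T.length) (hU : U <:+: T) : IsPeriod U (T.length - ℓ) := by
  obtain ⟨h1, h2, h3⟩ := h
  obtain ⟨u, v, rfl⟩ := hU
  refine ⟨by omega, fun i hi => ?_⟩
  set p := (u ++ U ++ v).length - ℓ with hp
  have hL : (u ++ U ++ v).length = u.length + U.length + v.length := by simp; omega
  have h4 := congrArg (fun l => l[u.length + i]?) h3
  simp only [List.getElem?_drop] at h4
  rw [List.getElem?_take_of_lt (by omega)] at h4
  have e1 : (u ++ U ++ v)[u.length + i]? = U[i]? := by
    rw [List.append_assoc, List.getElem?_append_right (by omega),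
      List.getElem?_append_left (by omega)]
    congr 1; omega
  have e2 : (u ++ U ++ v)[p + (u.length + i)]? = U[i + p]? := by
    rw [List.append_assoc, List.getElem?_append_right (by omega),
      List.getElem?_append_left (by omega)]
    congr 1; omega
  rw [e1, e2, List.getElem?_eq_getElem (by omega), List.getElem?_eq_getElem hi] at h4
  exact Option.some.inj h4

/-- Replacing the middle block `M` by `N` keeps a string trimmed by at most `d` letters
unbordered, provided the new string has a core with large shortest period. -/
theorem unbordered_transfer {α : Type*} {d i j : ℕ} {A B : List α} (M N : List α)
    (hA : A.length = 3 * d) (hB : B.length = 3 * d) (hij : i + j ≤ d)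
    (hper : (A.drop d ++ N ++ B.take (2 * d)).length
      - per (A.drop d ++ N ++ B.take (2 * d)) ≤ d)
    (hM : Unbordered (A.drop i ++ M ++ B.take (3 * d - j))) :
    Unbordered (A.drop i ++ N ++ B.take (3 * d - j)) := by
  intro ℓ hl hb
  have hinf : A.drop d ++ N ++ B.take (2 * d) <:+: A.drop i ++ N ++ B.take (3 * d - j) := by
    refine ⟨(A.drop i).take (d - i), (B.take (3 * d - j)).drop (2 * d), ?_⟩
    have e1 : (A.drop i).take (d - i) ++ A.drop d = A.drop i := by
      conv_rhs => rw [← List.take_append_drop (d - i) (A.drop i)]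
      rw [List.drop_drop]
      congr 2; omega
    have e2 : B.take (2 * d) ++ (B.take (3 * d - j)).drop (2 * d) = B.take (3 * d - j) := by
      conv_rhs => rw [← List.take_append_drop (2 * d) (B.take (3 * d - j))]
      rw [List.take_take]
      congr 2; omega
    conv_rhs => rw [← e1, ← e2]
    simp only [List.append_assoc]
  have hle : per (A.drop d ++ N ++ B.take (2 * d)) ≤ _ :=
    Nat.sInf_le (hb.isPeriod_infix hl hinf)
  obtain ⟨h1, h2, h3⟩ := hb
  have hlen : ∀ K : List α, (A.drop i ++ K ++ B.take (3 * d - j)).length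
      = (3 * d - i) + K.length + (3 * d - j) := by
    intro K; simp [hA, hB]; omega
  have hcore : (A.drop d ++ N ++ B.take (2 * d)).length = 4 * d + N.length := by
    simp [hA, hB]; omega
  rw [hlen] at hle hl h2
  rw [hcore] at hper
  have hsmall : ℓ + i + j ≤ 3 * d := by omega
  -- A border this short is read off from the two outer blocks alone.
  have htake : ∀ K : List α, (A.drop i ++ K ++ B.take (3 * d - j)).take ℓ
      = (A.drop i).take ℓ := by
    intro K
    rw [List.append_assoc, List.take_append_of_le_length (by simp [hA]; omega)]
  have hdrop : ∀ K : List α, (A.drop i ++ K ++ B.take (3 * d - j)).drop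
      ((A.drop i ++ K ++ B.take (3 * d - j)).length - ℓ)
      = (B.take (3 * d - j)).drop (3 * d - j - ℓ) := by
    intro K
    have : (A.drop i ++ K ++ B.take (3 * d - j)).length - ℓ
        = (A.drop i ++ K).length + (3 * d - j - ℓ) := by
      rw [hlen, List.length_append, List.length_drop, hA]; omega
    rw [this, List.drop_append]
    simp
  rw [htake, hdrop] at h3
  refine hM ℓ (by rw [hlen]; omega) ⟨h1, by rw [hlen]; omega, ?_⟩
  rw [htake, hdrop, h3]

/-- The defect `|X| - L(X)` does not grow when the middle block `M` is replaced by `N`: a longest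
unbordered factor of `A ++ M ++ B` contains `M`, and its counterpart in `A ++ N ++ B` is
unbordered. -/
theorem defect_le {α : Type*} {d : ℕ} {A B : List α} (M N : List α) (hd : 1 ≤ d)
    (hA : A.length = 3 * d) (hB : B.length = 3 * d)
    (hper : (A.drop d ++ N ++ B.take (2 * d)).length
      - per (A.drop d ++ N ++ B.take (2 * d)) ≤ d)
    (hM : (A ++ M ++ B).length - maxUnb (A ++ M ++ B) ≤ d) :
    (A ++ N ++ B).length - maxUnb (A ++ N ++ B)
      ≤ (A ++ M ++ B).length - maxUnb (A ++ M ++ B) := by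
  have hlen : ∀ K : List α, (A ++ K ++ B).length = 6 * d + K.length := by
    intro K; simp [hA, hB]; omega
  obtain ⟨T, -, ⟨u, v, huv⟩, hT, hTl⟩ :=
    exists_of_maxUnb_pos (A ++ M ++ B) (by rw [hlen] at hM; omega)
  have hl := congrArg List.length huv
  rw [hlen] at hM hl
  rw [List.length_append, List.length_append] at hl
  have hTeq : T = A.drop u.length ++ M ++ B.take (3 * d - v.length) := by
    have e1 : T ++ v = A.drop u.length ++ M ++ B := by
      have := congrArg (List.drop u.length) huv
      rw [List.append_assoc, List.drop_left, List.append_assoc,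
        List.drop_append_of_le_length (by omega)] at this
      rw [this, List.append_assoc]
    have e2 := congrArg (List.take T.length) e1
    rw [List.take_left, List.take_append, List.take_of_length_le] at e2
    · rw [e2]
      congr 2
      rw [List.length_append, List.length_drop]
      omega
    · rw [List.length_append, List.length_drop]
      omega
  rw [hTeq] at hT
  have hN := unbordered_transfer M N hA hB (by omega) hper hT
  have hNl : (A.drop u.length ++ N ++ B.take (3 * d - v.length)).length
      = (3 * d - u.length) + N.length + (3 * d - v.length) := by
    simp [hA, hB]; omega
  have := length_le_maxUnb (S := A ++ N ++ B)
    (List.ne_nil_of_length_pos (by rw [hNl]; omega))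
    ⟨A.take u.length, B.drop (3 * d - v.length), by
      conv_rhs => rw [← List.take_append_drop u.length A,
        ← List.take_append_drop (3 * d - v.length) B]
      simp only [List.append_assoc]⟩ hN
  rw [hlen, hlen]
  omega

/-- let `S ∈ Σⁿ`, `d ≥ 1`, `n > 6d`, and let `S̄ = S[1,3d]·S[n-3d+1,n]`,
`S' = S[d+1,n-d]`, `S̄' = S[d+1,3d]·S[n-3d+1,n-d]`. If `|S̄| - L(S̄) ≤ d`, `|S'| - per(S') ≤ d`,
and `|S̄'| - per(S̄') ≤ d`, then `|S| - L(S) = |S̄| - L(S̄)`. -/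
theorem reduction_correctness {α : Type*} (n d : ℕ) (S : List α)
    (hlen : S.length = n) (hd : 1 ≤ d) (hn : 6 * d < n)
    (Sbar S' Sbar' : List α)
    (hSbar : Sbar = substr S 1 (3 * d) ++ substr S (n - 3 * d + 1) n)
    (hS' : S' = substr S (d + 1) (n - d))
    (hSbar' : Sbar' = substr S (d + 1) (3 * d) ++ substr S (n - 3 * d + 1) (n - d))
    (hb1 : Sbar.length - maxUnb Sbar ≤ d)
    (hb2 : S'.length - per S' ≤ d)
    (hb3 : Sbar'.length - per Sbar' ≤ d) :
    S.length - maxUnb S = Sbar.length - maxUnb Sbar := by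
  subst hlen
  obtain ⟨A, M, B, rfl, hA, hB⟩ : ∃ A M B : List α, S = A ++ M ++ B ∧
      A.length = 3 * d ∧ B.length = 3 * d := by
    refine ⟨S.take (3 * d), (S.drop (3 * d)).take (S.length - 6 * d),
      (S.drop (3 * d)).drop (S.length - 6 * d), ?_, ?_, ?_⟩
    · rw [List.append_assoc, List.take_append_drop, List.take_append_drop]
    · simp; omega
    · simp; omega
  have hlen : (A ++ M ++ B).length = 6 * d + M.length := by simp [hA, hB]; omega
  have s1 : substr (A ++ M ++ B) 1 (3 * d) = A := by
    simp [substr, ← hA]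
  have s2 : substr (A ++ M ++ B) ((A ++ M ++ B).length - 3 * d + 1) (A ++ M ++ B).length = B := by
    have e : (A ++ M ++ B).length - 3 * d + 1 - 1 = (A ++ M).length := by
      rw [hlen, List.length_append, hA]; omega
    rw [substr, e, List.drop_left, List.take_of_length_le]
    omega
  have s3 : substr (A ++ M ++ B) (d + 1) ((A ++ M ++ B).length - d)
      = A.drop d ++ M ++ B.take (2 * d) := by
    have e : (A ++ M ++ B).length - d + 1 - (d + 1) = (A.drop d ++ M).length + 2 * d := by
      rw [hlen, List.length_append, List.length_drop, hA]; omega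
    rw [substr, e, Nat.add_sub_cancel, List.append_assoc,
      List.drop_append_of_le_length (by omega), ← List.append_assoc, List.take_length_add_append]
  have s4 : substr (A ++ M ++ B) (d + 1) (3 * d) = A.drop d := by
    have e : 3 * d + 1 - (d + 1) = (A.drop d).length := by
      rw [List.length_drop, hA]; omega
    rw [substr, e, Nat.add_sub_cancel, List.append_assoc,
      List.drop_append_of_le_length (by omega), List.take_left]
  have s5 : substr (A ++ M ++ B) ((A ++ M ++ B).length - 3 * d + 1) ((A ++ M ++ B).length - d)
      = B.take (2 * d) := by
    have e : (A ++ M ++ B).length - 3 * d + 1 - 1 = (A ++ M).length := by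
      rw [hlen, List.length_append, hA]; omega
    rw [substr, e, List.drop_left]
    congr 1; omega
  rw [s1, s2] at hSbar
  rw [s3] at hS'
  rw [s4, s5] at hSbar'
  subst hSbar hS' hSbar'
  have hle := defect_le [] M hd hA hB hb2 (by simpa using hb1)
  rw [List.append_nil] at hle
  have hge := defect_le M [] hd hA hB (by simpa using hb3) (hle.trans hb1)
  rw [List.append_nil] at hge
  exact le_antisymm hle hge
end

section
/- There exists an absolute constant c > 0 such that for every alphabet Σ of size σ ≥ 2 and every n ∈ ℕ, if S ∈ Σⁿ is chosen uniformly at random, then E[n − per(S)] ≤ c/σ; moreover, for every real δ with 0 < δ ≤ 1, with probability at least 1 − δ one has n − per(S) ≤ c·(1 + log_σ(1/δ)). -/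
/-!
A string of length `n` with period `p ≤ n` is determined by its first `p` symbols, so at most `σ ^ p`
strings have period `p` (`card_isPeriod_le`). Both claims are union bounds over the possible values
of the shortest period, followed by geometric sums.

* Expectation: `∑ S, (n - per S) ≤ ∑_{p < n} σ ^ p (n - p)`, and `σ` times the right-hand side is at
  most `4 σ ^ n` (`mul_sum_weighted_le`).
* Tail: for `1 ≤ k ≤ n`, at most `∑_{p ≤ n - k} σ ^ p ≤ 2 σ ^ (n - k) ≤ σ ^ (n - k + 1)` strings satisfy
  `n - per S ≥ k` (`card_tail_mul_le`), and none do for `k > n`. With `k = ⌊4 (1 + log_σ (1/δ))⌋ + 1` this is at most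
  `δ σ ^ n`.

The constant is `c = 4`.
-/

open Finset

lemma isPeriod_per {α : Type*} (T : List α) : IsPeriod T (per T) :=
  Nat.sInf_mem (s := {p | IsPeriod T p}) ⟨T.length + 1, by omega, fun i h => by omega⟩

open Classical in
/-- A string with period `p` is determined by its first `p` symbols. -/
lemma card_isPeriod_le {Γ : Type} [Fintype Γ] {n p : ℕ} (hp : p ≤ n) :
    (univ.filter fun S : Fin n → Γ => IsPeriod (List.ofFn S) p).card ≤ Fintype.card Γ ^ p := by
  have hcard : (univ : Finset (Fin p → Γ)).card = Fintype.card Γ ^ p := by simp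
  rw [← hcard]
  refine Finset.card_le_card_of_injOn (fun S j => S (Fin.castLE hp j)) (by simp) ?_
  intro S hS T hT hST
  simp only [coe_filter, mem_univ, true_and, Set.mem_ofPred_eq] at hS hT
  have key : ∀ i (hi : i < n), S ⟨i, hi⟩ = T ⟨i, hi⟩ := by
    intro i
    induction i using Nat.strong_induction_on with
    | _ i ih =>
      intro hi
      by_cases hip : i < p
      · exact congrFun hST ⟨i, hip⟩
      · obtain ⟨j, rfl⟩ : ∃ j, i = j + p := ⟨i - p, by omega⟩
        have h1 := hS.2 j (by simpa using hi)
        have h2 := hT.2 j (by simpa using hi)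
        simp only [List.getElem_ofFn] at h1 h2
        rw [← h1, ← h2]
        exact ih j (by have := hS.1; omega) (by omega)
  funext i
  exact key i i.2

lemma sum_pow_le {σ : ℕ} (hσ : 2 ≤ σ) (m : ℕ) :
    ∑ p ∈ range (m + 1), σ ^ p ≤ 2 * σ ^ m := by
  induction m with
  | zero => simp
  | succ m ih =>
    rw [sum_range_succ, pow_succ]
    nlinarith [Nat.mul_le_mul_left (σ ^ m) hσ]

lemma mul_sum_weighted_le {σ : ℕ} (hσ : 2 ≤ σ) (n : ℕ) :
    σ * ∑ p ∈ range n, σ ^ p * (n - p) ≤ 4 * σ ^ n := by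
  induction n with
  | zero => simp
  | succ n ih =>
    have h : ∑ p ∈ range (n + 1), σ ^ p * (n + 1 - p)
        = ∑ p ∈ range n, σ ^ p * (n - p) + ∑ p ∈ range (n + 1), σ ^ p := by
      rw [sum_range_succ, sum_range_succ _ n, ← add_assoc, ← sum_add_distrib]
      congr 1
      · refine sum_congr rfl fun p hp => ?_
        have hp := mem_range.1 hp
        rw [show n + 1 - p = (n - p) + 1 by omega]
        ring
      · simp
    rw [h, mul_add, pow_succ]
    have h2 := Nat.mul_le_mul_left σ (sum_pow_le hσ n)
    nlinarith [Nat.mul_le_mul_left (σ ^ n) hσ]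

/-- Union bound over the value of the shortest period. -/
lemma sum_sub_per_le {Γ : Type} [Fintype Γ] (n : ℕ) :
    ∑ S : Fin n → Γ, (n - per (List.ofFn S)) ≤ ∑ p ∈ range n, Fintype.card Γ ^ p * (n - p) := by
  classical
  calc ∑ S : Fin n → Γ, (n - per (List.ofFn S))
      ≤ ∑ S : Fin n → Γ, ∑ p ∈ range n, if IsPeriod (List.ofFn S) p then n - p else 0 := by
        refine sum_le_sum fun S _ => ?_
        by_cases h : per (List.ofFn S) < n
        · refine le_trans ?_ (single_le_sum (fun _ _ => Nat.zero_le _) (mem_range.2 h))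
          rw [if_pos (isPeriod_per _)]
        · rw [Nat.sub_eq_zero_of_le (not_lt.1 h)]
          exact Nat.zero_le _
    _ = ∑ p ∈ range n,
          (univ.filter fun S : Fin n → Γ => IsPeriod (List.ofFn S) p).card * (n - p) := by
        rw [sum_comm]
        refine sum_congr rfl fun p _ => ?_
        rw [← sum_filter, sum_const, smul_eq_mul]
    _ ≤ _ := sum_le_sum fun p hp =>
        Nat.mul_le_mul_right _ (card_isPeriod_le (mem_range.1 hp).le)

/-- The tail bound `P(n - per S ≥ k + 1) ≤ σ ^ (-k)`, cleared of denominators. -/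
lemma card_tail_mul_le {Γ : Type} [Fintype Γ] (hσ : 2 ≤ Fintype.card Γ) (n k : ℕ) :
    (univ.filter fun S : Fin n → Γ => k < n - per (List.ofFn S)).card * Fintype.card Γ ^ k
      ≤ Fintype.card Γ ^ n := by
  classical
  by_cases hk : k < n
  · obtain ⟨m, rfl⟩ : ∃ m, n = m + 1 + k := ⟨n - k - 1, by omega⟩
    rw [pow_add]
    refine Nat.mul_le_mul_right _ ?_
    have hsub : (univ.filter fun S : Fin (m + 1 + k) → Γ => k < m + 1 + k - per (List.ofFn S)) ⊆
        (range (m + 1)).biUnion fun p =>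
          univ.filter fun S : Fin (m + 1 + k) → Γ => IsPeriod (List.ofFn S) p := by
      intro S hS
      have hS := (mem_filter.1 hS).2
      exact mem_biUnion.2 ⟨per (List.ofFn S), mem_range.2 (by omega),
        mem_filter.2 ⟨mem_univ _, isPeriod_per _⟩⟩
    calc _ ≤ _ := card_le_card hsub
      _ ≤ _ := card_biUnion_le
      _ ≤ ∑ p ∈ range (m + 1), Fintype.card Γ ^ p := sum_le_sum fun p hp =>
          card_isPeriod_le (by have := mem_range.1 hp; omega)
      _ ≤ 2 * Fintype.card Γ ^ m := sum_pow_le hσ m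
      _ ≤ Fintype.card Γ ^ (m + 1) := by
          rw [pow_succ, mul_comm]
          exact Nat.mul_le_mul_left _ hσ
  · rw [filter_false_of_mem fun S _ => by omega]
    simp

/-- there is an absolute constant `c > 0` such that for every alphabet of size
`σ ≥ 2` and every `n`, a uniformly random `S ∈ Σⁿ` satisfies `E[n - per(S)] ≤ c/σ`, and for every
`0 < δ ≤ 1`, with probability at least `1 - δ` one has `n - per(S) ≤ c·(1 + log_σ(1/δ))`. -/
theorem expected_and_whp_period : ∃ c : ℝ, 0 < c ∧
    ∀ (σ : ℕ), 2 ≤ σ → ∀ (Γ : Type) [Fintype Γ], Fintype.card Γ = σ → ∀ n : ℕ,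
      (∑ S : Fin n → Γ, ((n - per (List.ofFn S) : ℕ) : ℝ)) / (σ : ℝ) ^ n ≤ c / σ ∧
      ∀ δ : ℝ, 0 < δ → δ ≤ 1 →
        1 - δ ≤ (((univ.filter fun S : Fin n → Γ =>
            ((n - per (List.ofFn S) : ℕ) : ℝ) ≤ c * (1 + Real.logb σ (1 / δ))).card : ℝ)) /
          (σ : ℝ) ^ n := by
  refine ⟨4, by norm_num, ?_⟩
  rintro σ hσ Γ _ rfl n
  have hσ0 : (0 : ℝ) < (Fintype.card Γ : ℝ) := by exact_mod_cast (by omega : 0 < Fintype.card Γ)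
  have hσ1 : (1 : ℝ) < (Fintype.card Γ : ℝ) := by exact_mod_cast (by omega : 1 < Fintype.card Γ)
  have hpow : (0 : ℝ) < (Fintype.card Γ : ℝ) ^ n := pow_pos hσ0 n
  constructor
  · rw [div_le_div_iff₀ hpow hσ0, mul_comm]
    have h := (Nat.mul_le_mul_left (Fintype.card Γ) (sum_sub_per_le (Γ := Γ) n)).trans
      (mul_sum_weighted_le hσ n)
    exact_mod_cast h
  · intro δ hδ hδ1
    set L := Real.logb (Fintype.card Γ : ℝ) (1 / δ) with hL
    have hL0 : 0 ≤ L := Real.logb_nonneg hσ1 (by rw [le_div_iff₀ hδ]; linarith)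
    set k := ⌊4 * (1 + L)⌋₊ with hk
    have hLk : L ≤ k := by
      have := Nat.lt_floor_add_one (4 * (1 + L))
      rw [← hk] at this
      linarith
    have hinv : 1 / δ ≤ (Fintype.card Γ : ℝ) ^ k := by
      rw [← Real.rpow_natCast]
      exact (Real.logb_le_iff_le_rpow hσ1 (by positivity)).1 hLk
    have hiff : ∀ m : ℕ, (m : ℝ) ≤ 4 * (1 + L) ↔ ¬ k < m := fun m => by
      rw [not_lt, hk, Nat.le_floor_iff (by positivity)]
    have hsplit := card_filter_add_card_filter_not (s := (univ : Finset (Fin n → Γ)))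
      (fun S => k < n - per (List.ofFn S))
    have htail : ((univ.filter fun S : Fin n → Γ => k < n - per (List.ofFn S)).card : ℝ)
        * (Fintype.card Γ : ℝ) ^ k ≤ (Fintype.card Γ : ℝ) ^ n := by
      exact_mod_cast card_tail_mul_le hσ n k
    simp only [hiff]
    have hsplitR : ((univ.filter fun S : Fin n → Γ => k < n - per (List.ofFn S)).card : ℝ)
        + ((univ.filter fun S : Fin n → Γ => ¬ k < n - per (List.ofFn S)).card : ℝ)
        = (Fintype.card Γ : ℝ) ^ n := by
      rw [← Nat.cast_add, hsplit]
      simp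
    rw [le_div_iff₀ hpow]
    have hbad : ((univ.filter fun S : Fin n → Γ => k < n - per (List.ofFn S)).card : ℝ)
        ≤ δ * (Fintype.card Γ : ℝ) ^ n := by
      have h1 := (mul_le_mul_of_nonneg_left hinv (Nat.cast_nonneg (α := ℝ)
        (univ.filter fun S : Fin n → Γ => k < n - per (List.ofFn S)).card)).trans htail
      rw [mul_one_div, div_le_iff₀ hδ] at h1
      linarith
    linarith
end
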